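/- For z, y ∈ k^×, the formulas defining M̃_3(z,y) endow the 3-dimensional k-vector space with an H_k-module structure, and the H_k-module M̃_3(z,y) is simple if and only if y^3 ≠ z. -/

import Mathlib

/-- The defining relations of the affine Hecke algebra of type `A_2` (for `Gl_3`),
on the free algebra on four generators `T = X 0`, `T⁻¹ = X 1`, `S_1 = X 2`, `S_2 = X 3`. -/
inductive HeckeRel (R : Type) [CommRing R] (q : R) :
    FreeAlgebra R (Fin 4) → FreeAlgebra R (Fin 4) → Prop
  | TTinv : HeckeRel R q (FreeAlgebra.ι R 0 * FreeAlgebra.ι R 1) 1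
  | TinvT : HeckeRel R q (FreeAlgebra.ι R 1 * FreeAlgebra.ι R 0) 1
  | quad : HeckeRel R q
      ((FreeAlgebra.ι R 2 + 1) * (FreeAlgebra.ι R 2 - algebraMap R (FreeAlgebra R (Fin 4)) q)) 0
  | T3S1 : HeckeRel R q (FreeAlgebra.ι R 0 ^ 3 * FreeAlgebra.ι R 2)
      (FreeAlgebra.ι R 2 * FreeAlgebra.ι R 0 ^ 3)
  | braid : HeckeRel R q (FreeAlgebra.ι R 2 * FreeAlgebra.ι R 3 * FreeAlgebra.ι R 2)
      (FreeAlgebra.ι R 3 * FreeAlgebra.ι R 2 * FreeAlgebra.ι R 3)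
  | TS2 : HeckeRel R q (FreeAlgebra.ι R 0 * FreeAlgebra.ι R 3)
      (FreeAlgebra.ι R 2 * FreeAlgebra.ι R 0)

/-- The affine Hecke algebra `H_R` with parameter `q ∈ R`. -/
abbrev HeckeAlg (R : Type) [CommRing R] (q : R) := RingQuot (HeckeRel R q)

namespace HeckeAlg

variable (R : Type) [CommRing R] (q : R)

noncomputable def gen (i : Fin 4) : HeckeAlg R q :=
  RingQuot.mkAlgHom R (HeckeRel R q) (FreeAlgebra.ι R i)

noncomputable def T : HeckeAlg R q := gen R q 0
noncomputable def Tinv : HeckeAlg R q := gen R q 1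
noncomputable def S1 : HeckeAlg R q := gen R q 2
noncomputable def S2 : HeckeAlg R q := gen R q 3

theorem T_mul_Tinv : T R q * Tinv R q = 1 := by
  simpa [T, Tinv, gen, map_mul, map_one] using
    RingQuot.mkAlgHom_rel R (HeckeRel.TTinv (R := R) (q := q))

theorem Tinv_mul_T : Tinv R q * T R q = 1 := by
  simpa [T, Tinv, gen, map_mul, map_one] using
    RingQuot.mkAlgHom_rel R (HeckeRel.TinvT (R := R) (q := q))

theorem quad_rel : (S1 R q + 1) * (S1 R q - algebraMap R (HeckeAlg R q) q) = 0 := by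
  simpa [S1, gen, map_mul, map_add, map_sub, map_one, map_zero, AlgHom.commutes] using
    RingQuot.mkAlgHom_rel R (HeckeRel.quad (R := R) (q := q))

theorem T3_mul_S1 : T R q ^ 3 * S1 R q = S1 R q * T R q ^ 3 := by
  simpa [T, S1, gen, map_mul, map_pow] using
    RingQuot.mkAlgHom_rel R (HeckeRel.T3S1 (R := R) (q := q))

theorem braid_rel : S1 R q * S2 R q * S1 R q = S2 R q * S1 R q * S2 R q := by
  simpa [S1, S2, gen, map_mul] using
    RingQuot.mkAlgHom_rel R (HeckeRel.braid (R := R) (q := q))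

theorem T_mul_S2 : T R q * S2 R q = S1 R q * T R q := by
  simpa [T, S1, S2, gen, map_mul] using
    RingQuot.mkAlgHom_rel R (HeckeRel.TS2 (R := R) (q := q))

/-- The canonical (base change) ring homomorphism `H_R → H_S` induced by a ring
homomorphism `R → S` sending the parameter `q` to the parameter `q'`. -/
noncomputable def map {R S : Type} [CommRing R] [CommRing S] (f : R →+* S) (q : R) (q' : S)
    (h : f q = q') : HeckeAlg R q →+* HeckeAlg S q' := by
  subst h
  letI : Algebra R (HeckeAlg S (f q)) :=
    RingHom.toAlgebra' ((algebraMap S (HeckeAlg S (f q))).comp f)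
      (fun c x => by simpa using Algebra.commutes (f c) x)
  refine RingQuot.lift
    ⟨((FreeAlgebra.lift R fun i => gen S (f q) i : _ →ₐ[R] HeckeAlg S (f q)) :
        FreeAlgebra R (Fin 4) →+* HeckeAlg S (f q)), ?_⟩
  have key : ∀ i : Fin 4,
      (FreeAlgebra.lift R fun j => gen S (f q) j) (FreeAlgebra.ι R i) = gen S (f q) i :=
    fun i => FreeAlgebra.lift_ι_apply _ _
  have keyq : (FreeAlgebra.lift R fun j => gen S (f q) j)
      (algebraMap R (FreeAlgebra R (Fin 4)) q) = algebraMap S (HeckeAlg S (f q)) (f q) := by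
    rw [AlgHom.commutes]
    rfl
  intro a b hab
  cases hab with
  | TTinv => simpa [key, T, Tinv] using T_mul_Tinv S (f q)
  | TinvT => simpa [key, T, Tinv] using Tinv_mul_T S (f q)
  | quad => simpa [key, keyq, S1] using quad_rel S (f q)
  | T3S1 => simpa [key, T, S1] using T3_mul_S1 S (f q)
  | braid => simpa [key, S1, S2] using braid_rel S (f q)
  | TS2 => simpa [key, T, S1, S2] using T_mul_S2 S (f q)

/-- `S_1⁻¹ = q⁻¹ (S_1 - q + 1)`, where `qi` is an inverse of `q` in `R`. -/
noncomputable def S1i (qi : R) : HeckeAlg R q :=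
  algebraMap R (HeckeAlg R q) qi * (S1 R q - algebraMap R (HeckeAlg R q) q + 1)

/-- `S_2⁻¹ = q⁻¹ (S_2 - q + 1)`, where `qi` is an inverse of `q` in `R`. -/
noncomputable def S2i (qi : R) : HeckeAlg R q :=
  algebraMap R (HeckeAlg R q) qi * (S2 R q - algebraMap R (HeckeAlg R q) q + 1)

/-- The Bernstein elements `Y_1 = q S_1⁻¹ S_2⁻¹ T`, `Y_2 = S_2⁻¹ T S_1`,
`Y_3 = q⁻¹ T S_1 S_2`, where `qi` is an inverse of `q` in `R`. -/
noncomputable def Y (qi : R) : Fin 3 → HeckeAlg R q :=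
  ![algebraMap R (HeckeAlg R q) q * S1i R q qi * S2i R q qi * T R q,
    S2i R q qi * T R q * S1 R q,
    algebraMap R (HeckeAlg R q) qi * T R q * S1 R q * S2 R q]

end HeckeAlg

noncomputable section

variable (p : ℕ) [Fact p.Prime] (k : Type) [Field k] [IsAlgClosed k] [CharP k p]

/-- `H_k = H ⊗_{ℤ[q]} k` with `q ↦ 0`. -/
abbrev Hk : Type := HeckeAlg k 0

/-- The action of `T` on a `1`-dimensional space: multiplication by `c`. -/
def Tmat1 (c : k) : Module.End k (Fin 1 → k) := Matrix.mulVecLin !![c]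

/-- The action of `T` on the `2`-dimensional space with basis `w, Tw` where
`T(Tw) = -y²w - yTw`. -/
def Tmat2 (y : k) : Module.End k (Fin 2 → k) := Matrix.mulVecLin !![0, -y^2; 1, -y]

/-- The action of `T` on the `3`-dimensional space with basis `v, Tv, T²v` where
`T(T²v) = zv`. -/
def Tmat3 (z : k) : Module.End k (Fin 3 → k) := Matrix.mulVecLin !![0, 0, z; 1, 0, 0; 0, 1, 0]

/-- The action of `T` on the `6`-dimensional space with basis `v, Tv, T²v, w, Tw, T²w`
where `T(T²v) = zv`, `T(T²w) = zw`. -/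
def Tmat6 (z : k) : Module.End k (Fin 6 → k) := Matrix.mulVecLin
  !![0, 0, z, 0, 0, 0;
     1, 0, 0, 0, 0, 0;
     0, 1, 0, 0, 0, 0;
     0, 0, 0, 0, 0, z;
     0, 0, 0, 1, 0, 0;
     0, 0, 0, 0, 1, 0]

/-- The action of `S_1` on `L_6(z,y)`: `S_1v = 0`, `S_1(Tv) = T²w`, `S_1(T²v) = -T²v`,
`S_1w = -w`, `S_1(Tw) = (y/z)T²v`, `S_1(T²w) = -T²w`. -/
def SL6 (z y : k) : Module.End k (Fin 6 → k) := Matrix.mulVecLin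
  !![0, 0, 0,  0,  0,     0;
     0, 0, 0,  0,  0,     0;
     0, 0, -1, 0,  y / z, 0;
     0, 0, 0,  -1, 0,     0;
     0, 0, 0,  0,  0,     0;
     0, 1, 0,  0,  0,     -1]

/-- The action of `S_1` on `L̃_6(z,y)`: as on `L_6(z,y)` except `S_1v = w`, `S_1(Tv) = 0`. -/
def SLt6 (z y : k) : Module.End k (Fin 6 → k) := Matrix.mulVecLin
  !![0, 0, 0,  0,  0,     0;
     0, 0, 0,  0,  0,     0;
     0, 0, -1, 0,  y / z, 0;
     1, 0, 0,  -1, 0,     0;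
     0, 0, 0,  0,  0,     0;
     0, 0, 0,  0,  0,     -1]

/-- The action of `S_1` on `K_6(z,y,y')`: `S_1v = w`, `S_1(Tv) = (y/y')T²w`,
`S_1(T²v) = -T²v`, `S_1w = -w`, `S_1(Tw) = (y'/z)T²v`, `S_1(T²w) = -T²w`. -/
def SK6 (z y y' : k) : Module.End k (Fin 6 → k) := Matrix.mulVecLin
  !![0, 0,      0,  0,  0,      0;
     0, 0,      0,  0,  0,      0;
     0, 0,      -1, 0,  y' / z, 0;
     1, 0,      0,  -1, 0,      0;
     0, 0,      0,  0,  0,      0;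
     0, y / y', 0,  0,  0,      -1]

/-- The action of `S_1` on `M_3(z,y)`: `S_1v = 0`, `S_1(Tv) = y⁻¹T²v`, `S_1(T²v) = -T²v`. -/
def SM3 (y : k) : Module.End k (Fin 3 → k) := Matrix.mulVecLin
  !![0, 0, 0; 0, 0, 0; 0, y⁻¹, -1]

/-- The action of `S_1` on `M̃_3(z,y)`: `S_1v = -v`, `S_1(Tv) = -y⁻¹T²v`, `S_1(T²v) = -T²v`. -/
def SMt3 (y : k) : Module.End k (Fin 3 → k) := Matrix.mulVecLin
  !![-1, 0, 0; 0, 0, 0; 0, -y⁻¹, -1]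

/-- The action of `S_1` on `N_3(z,y)`: `S_1v = -v`, `S_1(Tv) = 0`, `S_1(T²v) = -yTv - T²v`. -/
def SN3 (y : k) : Module.End k (Fin 3 → k) := Matrix.mulVecLin
  !![-1, 0, 0; 0, 0, -y; 0, 0, -1]

/-- The action of `S_1` on `Ñ_3(z,y)`: `S_1v = 0`, `S_1(Tv) = 0`, `S_1(T²v) = yTv - T²v`. -/
def SNt3 (y : k) : Module.End k (Fin 3 → k) := Matrix.mulVecLin
  !![0, 0, 0; 0, 0, y; 0, 0, -1]

/-- The action of `S_1` on `P_3(z)`: `S_1v = 0`, `S_1(Tv) = 0`, `S_1(T²v) = -T²v`. -/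
def SP3 : Module.End k (Fin 3 → k) := Matrix.mulVecLin
  !![0, 0, 0; 0, 0, 0; 0, 0, -1]

/-- The action of `S_1` on `P̃_3(z)`: `S_1v = -v`, `S_1(Tv) = 0`, `S_1(T²v) = -T²v`. -/
def SPt3 : Module.End k (Fin 3 → k) := Matrix.mulVecLin
  !![-1, 0, 0; 0, 0, 0; 0, 0, -1]

/-- The action of `S_1` on `M_2(y)`: `S_1w = -w`, `S_1(Tw) = 0`. -/
def SM2 : Module.End k (Fin 2 → k) := Matrix.mulVecLin !![-1, 0; 0, 0]

/-- The action of `S_1` on `M̃_2(y)`: `S_1w = 0`, `S_1(Tw) = -Tw`. -/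
def SMt2 : Module.End k (Fin 2 → k) := Matrix.mulVecLin !![0, 0; 0, -1]

end

/-!
Write `t` and `s` for the actions of `T` and `S₁` on `M̃₃(z, y)`. Then `s + 1` has rank one: with
`w = Tv` and `φ` equal to `y⁻¹` times the coordinate at `Tv`, it is `x ↦ φ x • (y - t) w`.

A rank one operator `a = φ ⊗ u` and its conjugate `b = t⁻¹ a t` satisfy the Temperley–Lieb
relations `a² = (1 + q) a`, `b² = (1 + q) b`, `a b a = q a`, `b a b = q b` as soon as
`φ u = 1 + q` and `φ (t u) φ (t⁻¹ u) = q`, and these imply the quadratic and braid relations for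
`a - 1` and `b - 1`. This gives the module structure.

If `y` is an eigenvalue of `t`, the range of `y - t` is a proper nonzero subspace stable under `t`;
it contains the range of `s + 1`, so it is also stable under `s`. If `y` is not an eigenvalue, let
`W ≠ 0` be stable. No nonzero `t`-stable subspace lies in the kernel of `φ`, so `W` contains
`(y - t) w`, hence `w` because `y - t` restricts to an automorphism of `W`, hence everything because
`w` is cyclic for `t`. Finally `y` is an eigenvalue of `t` exactly when `y³ = z`.
-/

section InvariantSubspaces

open Module

theorem mem_invtSubmodule_of_mul_eq_one {R M : Type*} [Ring R] [AddCommGroup M] [Module R M]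
    {f g : End R M} {W : Submodule R M} [IsArtinian R W] (hgf : g * f = 1)
    (hW : W ∈ f.invtSubmodule) : W ∈ g.invtSubmodule := by
  have hleft : Function.LeftInverse g f := LinearMap.congr_fun hgf
  have hinj : Function.Injective (f.restrict hW) := fun x y hxy ↦
    Subtype.ext <| hleft.injective (congrArg Subtype.val hxy)
  intro x hx
  obtain ⟨y, hy⟩ := IsArtinian.surjective_of_injective_endomorphism _ hinj ⟨x, hx⟩
  have hfy : f y = x := congrArg Subtype.val hy
  rw [Submodule.mem_comap, ← hfy, hleft]
  exact y.2

theorem range_mem_invtSubmodule_of_commute {R M : Type*} [Semiring R] [AddCommMonoid M]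
    [Module R M] {f g : End R M} (h : Commute f g) : LinearMap.range g ∈ f.invtSubmodule := by
  rintro _ ⟨x, rfl⟩
  exact ⟨f x, (LinearMap.congr_fun h.eq x).symm⟩

theorem mem_invtSubmodule_smulRight_sub_one {R M : Type*} [CommRing R] [AddCommGroup M]
    [Module R M] (φ : Dual R M) {u : M} {W : Submodule R M} (hu : u ∈ W) :
    W ∈ End.invtSubmodule (φ.smulRight u - 1) :=
  fun _ hx ↦ W.sub_mem (W.smul_mem _ hu) hx

variable {k V : Type*} [Field k] [AddCommGroup V] [Module k V] [FiniteDimensional k V]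
  {t : End k V} {φ : Dual k V} {w : V} {μ : k}

theorem eq_bot_or_eq_top_of_not_hasEigenvalue (hμ : ¬ t.HasEigenvalue μ)
    (hcyclic : ∀ W ∈ t.invtSubmodule, w ∈ W → W = ⊤)
    (hker : ∀ W ∈ t.invtSubmodule, W ≤ LinearMap.ker φ → W = ⊥)
    {W : Submodule k V} (ht : W ∈ t.invtSubmodule)
    (hs : W ∈ End.invtSubmodule (φ.smulRight (μ • w - t w) - 1)) : W = ⊥ ∨ W = ⊤ := by
  refine or_iff_not_imp_left.mpr fun hW ↦ hcyclic W ht ?_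
  obtain ⟨x, hx, hφx⟩ := SetLike.not_le_iff_exists.mp (mt (hker W ht) hW)
  have hw : μ • w - t w ∈ W := by
    rw [← W.smul_mem_iff hφx]
    simpa using W.add_mem (hs hx) hx
  obtain ⟨d, hd⟩ : IsUnit (algebraMap k (End k V) μ - t) := by
    rwa [End.hasEigenvalue_iff_mem_spectrum, spectrum.notMem_iff] at hμ
  have hWd : W ∈ (d : End k V).invtSubmodule := fun x hx ↦ by
    simpa [hd] using W.sub_mem (W.smul_mem μ hx) (ht hx)
  have hinv : (↑d⁻¹ : End k V) (μ • w - t w) = w := by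
    simpa [hd] using LinearMap.congr_fun d.inv_mul w
  exact hinv ▸ mem_invtSubmodule_of_mul_eq_one d.inv_mul hWd hw

theorem forall_eq_bot_or_eq_top_iff_not_hasEigenvalue (hw : t w ≠ μ • w)
    (hcyclic : ∀ W ∈ t.invtSubmodule, w ∈ W → W = ⊤)
    (hker : ∀ W ∈ t.invtSubmodule, W ≤ LinearMap.ker φ → W = ⊥) :
    (∀ W : Submodule k V, W ∈ t.invtSubmodule →
      W ∈ End.invtSubmodule (φ.smulRight (μ • w - t w) - 1) → W = ⊥ ∨ W = ⊤) ↔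
      ¬ t.HasEigenvalue μ := by
  refine ⟨fun hsimple ↦ ?_, fun hμ W ↦ eq_bot_or_eq_top_of_not_hasEigenvalue hμ hcyclic hker⟩
  rw [End.hasEigenvalue_iff_mem_spectrum, spectrum.notMem_iff, LinearMap.isUnit_iff_range_eq_top]
  have hmem : μ • w - t w ∈ LinearMap.range (algebraMap k (End k V) μ - t) := ⟨w, by simp⟩
  have hcomm : Commute t (algebraMap k (End k V) μ - t) :=
    (Algebra.commute_algebraMap_right μ t).sub_right (Commute.refl t)
  refine (hsimple _ (range_mem_invtSubmodule_of_commute hcomm)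
    (mem_invtSubmodule_smulRight_sub_one φ hmem)).resolve_left fun hbot ↦ hw ?_
  rw [hbot, Submodule.mem_bot, sub_eq_zero] at hmem
  exact hmem.symm

end InvariantSubspaces

theorem quadratic_of_mul_self_eq_smul {R A : Type*} [CommRing R] [Ring A] [Algebra R A] {q : R}
    {a : A} (ha : a * a = (1 + q) • a) : (a - 1 + 1) * (a - 1 - algebraMap R A q) = 0 := by
  calc (a - 1 + 1) * (a - 1 - algebraMap R A q)
      = a * a - (a + a * algebraMap R A q) := by noncomm_ring
    _ = 0 := by rw [ha, add_smul, one_smul, ← Algebra.commutes, ← Algebra.smul_def, sub_self]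

theorem braid_of_temperleyLieb {R A : Type*} [CommRing R] [Ring A] [Algebra R A] {q : R} {a b : A}
    (ha : a * a = (1 + q) • a) (hb : b * b = (1 + q) • b) (hab : a * b * a = q • a)
    (hba : b * a * b = q • b) :
    (a - 1) * (b - 1) * (a - 1) = (b - 1) * (a - 1) * (b - 1) := by
  have expand (x y : A) (hx : x * x = (1 + q) • x) (hxy : x * y * x = q • x) :
      (x - 1) * (y - 1) * (x - 1) = x + y - x * y - y * x - 1 := by
    calc (x - 1) * (y - 1) * (x - 1)
        = x * y * x - x * x + 2 * x + y - x * y - y * x - 1 := by noncomm_ring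
      _ = x + y - x * y - y * x - 1 := by rw [hx, hxy, add_smul, one_smul]; noncomm_ring
  rw [expand a b ha hab, expand b a hb hba]
  abel

theorem conj_braid_of_mul_mul_eq_smul {R A : Type*} [CommRing R] [Ring A] [Algebra R A]
    {c d : R} {a : A} {t : Aˣ} (ha : a * a = (1 + c * d) • a) (hc : a * t * a = c • a)
    (hd : a * ↑t⁻¹ * a = d • a) :
    (a - 1) * (↑t⁻¹ * (a - 1) * t) * (a - 1) =
      (↑t⁻¹ * (a - 1) * t) * (a - 1) * (↑t⁻¹ * (a - 1) * t) := by
  have hconj : ↑t⁻¹ * (a - 1) * t = ↑t⁻¹ * a * t - 1 := by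
    rw [mul_sub_one, sub_mul, Units.inv_mul]
  rw [hconj]
  refine braid_of_temperleyLieb ha ?_ ?_ ?_
  · calc ↑t⁻¹ * a * t * (↑t⁻¹ * a * t)
        = ↑t⁻¹ * (a * a) * t := by simp [mul_assoc]
      _ = (1 + c * d) • (↑t⁻¹ * a * t) := by rw [ha, mul_smul_comm, smul_mul_assoc]
  · calc a * (↑t⁻¹ * a * t) * a
        = a * ↑t⁻¹ * a * t * a := by simp only [mul_assoc]
      _ = (c * d) • a := by
        rw [hd, smul_mul_assoc, smul_mul_assoc, hc, smul_smul, mul_comm]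
  · calc ↑t⁻¹ * a * t * a * (↑t⁻¹ * a * t)
        = ↑t⁻¹ * (a * t * a * ↑t⁻¹ * a) * t := by simp only [mul_assoc]
      _ = (c * d) • (↑t⁻¹ * a * t) := by
        rw [hc, smul_mul_assoc, smul_mul_assoc, hd, smul_smul, mul_smul_comm, smul_mul_assoc]

theorem smulRight_mul_mul_smulRight {R M : Type*} [CommRing R] [AddCommGroup M] [Module R M]
    (φ : Module.Dual R M) (u : M) (f : Module.End R M) :
    (φ.smulRight u * f * φ.smulRight u : Module.End R M) = φ (f u) • φ.smulRight u := by
  ext x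
  simp [smul_smul, mul_comm]

namespace HeckeAlg

section Lift

variable {R : Type} [CommRing R] {q : R} {A : Type*} [Ring A] [Algebra R A]

/-- The homomorphism given by the universal property of the affine Hecke algebra, presented by the
invertible generator `T` and by `S₁`: the image of `S₂` is forced to be `t⁻¹ s t`. -/
noncomputable def lift (t : Aˣ) (s : A) (hquad : (s + 1) * (s - algebraMap R A q) = 0)
    (hcomm : Commute ((t : A) ^ 3) s)
    (hbraid : s * (↑t⁻¹ * s * t) * s = (↑t⁻¹ * s * t) * s * (↑t⁻¹ * s * t)) :
    HeckeAlg R q →ₐ[R] A :=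
  RingQuot.liftAlgHom R ⟨FreeAlgebra.lift R ![(t : A), ↑t⁻¹, s, ↑t⁻¹ * s * t], by
    intro a b hab
    cases hab with
    | TTinv => simp
    | TinvT => simp
    | quad => simpa using hquad
    | T3S1 => simpa using hcomm.eq
    | braid => simpa using hbraid
    | TS2 => simp [← mul_assoc]⟩

variable (t : Aˣ) (s : A) (hquad : (s + 1) * (s - algebraMap R A q) = 0)
  (hcomm : Commute ((t : A) ^ 3) s)
  (hbraid : s * (↑t⁻¹ * s * t) * s = (↑t⁻¹ * s * t) * s * (↑t⁻¹ * s * t))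

theorem lift_T : lift t s hquad hcomm hbraid (T R q) = t := by
  simp [lift, T, gen]

theorem lift_S1 : lift t s hquad hcomm hbraid (S1 R q) = s := by
  simp [lift, S1, gen]

end Lift

section RankOne

variable {R : Type} [CommRing R] {q : R} {M : Type*} [AddCommGroup M] [Module R M]

/-- The representation of the affine Hecke algebra in which `T` acts by `t` and `S₁ + 1` acts by the
rank one operator `x ↦ φ x • u`. -/
noncomputable def rankOneRep (t : (Module.End R M)ˣ) (φ : Module.Dual R M) (u : M)
    (hu : φ u = 1 + q) (htu : φ (t.1 u) * φ (t⁻¹.1 u) = q)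
    (hcomm : Commute ((t : Module.End R M) ^ 3) (φ.smulRight u)) :
    HeckeAlg R q →ₐ[R] Module.End R M :=
  have hsq : (φ.smulRight u * φ.smulRight u : Module.End R M) = (1 + q) • φ.smulRight u := by
    simpa [hu] using smulRight_mul_mul_smulRight φ u 1
  lift t (φ.smulRight u - 1)
    (quadratic_of_mul_self_eq_smul hsq)
    (hcomm.sub_right (Commute.one_right _))
    (conj_braid_of_mul_mul_eq_smul (by rw [hsq, htu])
      (smulRight_mul_mul_smulRight φ u t) (smulRight_mul_mul_smulRight φ u ↑t⁻¹))

variable (t : (Module.End R M)ˣ) (φ : Module.Dual R M) (u : M) (hu : φ u = 1 + q)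
  (htu : φ (t.1 u) * φ (t⁻¹.1 u) = q)
  (hcomm : Commute ((t : Module.End R M) ^ 3) (φ.smulRight u))

theorem rankOneRep_T : rankOneRep t φ u hu htu hcomm (T R q) = t := by
  rw [rankOneRep, lift_T]

theorem rankOneRep_S1 : rankOneRep t φ u hu htu hcomm (S1 R q) = φ.smulRight u - 1 := by
  rw [rankOneRep, lift_S1]

end RankOne

section Generators

variable {R : Type} [CommRing R] {q : R}

theorem adjoin_range_gen : Algebra.adjoin R (Set.range (gen R q)) = ⊤ := by
  have hrange : Set.range (gen R q) =
      RingQuot.mkAlgHom R (HeckeRel R q) '' Set.range (FreeAlgebra.ι R) :=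
    Set.range_comp _ _
  rw [hrange, ← AlgHom.map_adjoin, FreeAlgebra.adjoin_range_ι, Algebra.map_top,
    AlgHom.range_eq_top]
  exact RingQuot.mkAlgHom_surjective R (HeckeRel R q)

theorem S2_eq : S2 R q = Tinv R q * (S1 R q * T R q) := by
  rw [← T_mul_S2, ← mul_assoc, Tinv_mul_T, one_mul]

theorem forall_mem_invtSubmodule_iff {M : Type*} [AddCommGroup M] [Module R M]
    (ρ : HeckeAlg R q →ₐ[R] Module.End R M) {W : Submodule R M} [IsArtinian R W] :
    (∀ a, W ∈ (ρ a).invtSubmodule) ↔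
      W ∈ (ρ (T R q)).invtSubmodule ∧ W ∈ (ρ (S1 R q)).invtSubmodule := by
  refine ⟨fun hW ↦ ⟨hW _, hW _⟩, fun ⟨hT, hS1⟩ a ↦ ?_⟩
  have hTinv : W ∈ (ρ (Tinv R q)).invtSubmodule := by
    refine mem_invtSubmodule_of_mul_eq_one ?_ hT
    rw [← map_mul, Tinv_mul_T, map_one]
  have hS2 : W ∈ (ρ (S2 R q)).invtSubmodule := by
    rw [S2_eq, map_mul, map_mul]
    exact fun x hx ↦ hTinv (hS1 (hT hx))
  have ha : a ∈ Algebra.adjoin R (Set.range (gen R q)) := by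
    rw [adjoin_range_gen]
    exact Algebra.mem_top
  induction ha using Algebra.adjoin_induction with
  | mem a ha =>
    obtain ⟨i, rfl⟩ := ha
    fin_cases i
    exacts [hT, hTinv, hS1, hS2]
  | algebraMap r =>
    intro x hx
    simpa using W.smul_mem r hx
  | add a b _ _ ha hb =>
    intro x hx
    simpa using W.add_mem (ha hx) (hb hx)
  | mul a b _ _ ha hb =>
    intro x hx
    simpa using ha (hb hx)

end Generators

end HeckeAlg

section Tmat3

variable {k : Type} [Field k] {z y : k}

theorem Tmat3_apply (x : Fin 3 → k) : Tmat3 k z x = ![z * x 2, x 0, x 1] := by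
  ext i
  fin_cases i <;> simp [Tmat3, Matrix.mulVec, dotProduct, Fin.sum_univ_three]

theorem Tmat3_pow_three : Tmat3 k z ^ 3 = algebraMap k (Module.End k (Fin 3 → k)) z := by
  refine LinearMap.ext fun x ↦ ?_
  ext i
  fin_cases i <;> simp [pow_succ, Tmat3_apply]

theorem isUnit_Tmat3 (hz : z ≠ 0) : IsUnit (Tmat3 k z) := by
  rw [← isUnit_pow_iff three_ne_zero, Tmat3_pow_three]
  exact hz.isUnit.map (algebraMap k _)

theorem hasEigenvalue_Tmat3_iff : (Tmat3 k z).HasEigenvalue y ↔ y ^ 3 = z := by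
  constructor
  · intro hy
    obtain ⟨x, hx⟩ := hy.exists_hasEigenvector
    have hpow : y ^ 3 • x = z • x := by
      rw [← hx.pow_apply, Tmat3_pow_three, Module.algebraMap_end_apply]
    exact smul_left_injective k hx.2 hpow
  · rintro rfl
    refine Module.End.hasEigenvalue_of_hasEigenvector (x := ![y ^ 2, y, 1])
      (Module.End.hasEigenvector_iff.mpr ⟨Module.End.mem_eigenspace_iff.mpr ?_, ?_⟩)
    · ext i
      fin_cases i <;> simp [Tmat3_apply] <;> ring
    · exact fun h ↦ one_ne_zero (congrFun h 2)

theorem eq_top_of_mem_invtSubmodule_Tmat3 (hz : z ≠ 0) {W : Submodule k (Fin 3 → k)}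
    (hW : W ∈ (Tmat3 k z).invtSubmodule) (hTv : ![0, 1, 0] ∈ W) : W = ⊤ := by
  have hTTv : ![0, 0, 1] ∈ W := by
    simpa [Tmat3_apply] using hW hTv
  have hzv : ![z, 0, 0] ∈ W := by
    simpa [Tmat3_apply] using hW hTTv
  refine eq_top_iff.mpr fun x _ ↦ ?_
  have hx : x = (x 0 / z) • ![z, 0, 0] + x 1 • ![0, 1, 0] + x 2 • ![0, 0, 1] := by
    ext i
    fin_cases i <;> simp [hz]
  rw [hx]
  exact W.add_mem (W.add_mem (W.smul_mem _ hzv) (W.smul_mem _ hTv)) (W.smul_mem _ hTTv)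

theorem eq_bot_of_mem_invtSubmodule_Tmat3 (hz : z ≠ 0) {W : Submodule k (Fin 3 → k)}
    (hW : W ∈ (Tmat3 k z).invtSubmodule) (hWone : ∀ x ∈ W, x 1 = 0) : W = ⊥ := by
  refine (Submodule.eq_bot_iff W).mpr fun x hx ↦ ?_
  have hx0 : x 0 = 0 := by
    simpa [Tmat3_apply] using hWone _ (hW hx)
  have hx2 : x 2 = 0 := by
    simpa [Tmat3_apply, hz] using hWone _ (hW (hW hx))
  ext i
  fin_cases i
  exacts [hx0, hWone x hx, hx2]

end Tmat3

section Mt3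

variable {k : Type} [Field k]

/-- The linear form `φ` on the space of `M̃₃(z, y)` for which `S₁ + 1` acts as
`x ↦ φ x • (y Tv - T²v)`. -/
noncomputable def Mt3Form (y : k) : Module.Dual k (Fin 3 → k) :=
  y⁻¹ • LinearMap.proj 1

theorem Mt3Form_apply (y : k) (x : Fin 3 → k) : Mt3Form y x = y⁻¹ * x 1 := rfl

theorem SMt3_eq_smulRight_sub_one {y : k} (hy : y ≠ 0) :
    SMt3 k y = (Mt3Form y).smulRight ![0, y, -1] - 1 := by
  refine LinearMap.ext fun x ↦ ?_
  ext i
  fin_cases i <;>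
    simp [SMt3, Mt3Form_apply, Matrix.mulVec, dotProduct, Fin.sum_univ_three, field, sub_eq_add_neg]

theorem smul_sub_Tmat3 (z y : k) : y • ![0, 1, 0] - Tmat3 k z ![0, 1, 0] = ![0, y, -1] := by
  simp [Tmat3_apply]

/-- The action of `H_k` on `M̃₃(z, y)`. -/
noncomputable def Mt3Rep (z y : kˣ) : Hk k →ₐ[k] Module.End k (Fin 3 → k) :=
  HeckeAlg.rankOneRep (isUnit_Tmat3 z.ne_zero).unit (Mt3Form (y : k)) ![0, (y : k), -1]
    (by simp [Mt3Form_apply]) (by simp [Mt3Form_apply, Tmat3_apply])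
    (by rw [IsUnit.unit_spec, Tmat3_pow_three]; exact Algebra.commute_algebraMap_left _ _)

theorem Mt3Rep_T (z y : kˣ) : Mt3Rep z y (HeckeAlg.T k 0) = Tmat3 k z :=
  HeckeAlg.rankOneRep_T ..

theorem Mt3Rep_S1 (z y : kˣ) : Mt3Rep z y (HeckeAlg.S1 k 0) = SMt3 k y :=
  (HeckeAlg.rankOneRep_S1 ..).trans (SMt3_eq_smulRight_sub_one y.ne_zero).symm

theorem forall_invtSubmodule_Tmat3_SMt3_iff {z y : k} (hz : z ≠ 0) (hy : y ≠ 0) :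
    (∀ W : Submodule k (Fin 3 → k), W ∈ (Tmat3 k z).invtSubmodule →
      W ∈ (SMt3 k y).invtSubmodule → W = ⊥ ∨ W = ⊤) ↔ y ^ 3 ≠ z := by
  rw [SMt3_eq_smulRight_sub_one hy, ← smul_sub_Tmat3 z y, Ne, ← hasEigenvalue_Tmat3_iff]
  refine forall_eq_bot_or_eq_top_iff_not_hasEigenvalue (fun h ↦ ?_)
    (fun W hW ↦ eq_top_of_mem_invtSubmodule_Tmat3 hz hW)
    (fun W hW hker ↦ eq_bot_of_mem_invtSubmodule_Tmat3 hz hW fun x hx ↦ ?_)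
  · simpa [Tmat3_apply] using congrFun h 2
  · simpa [Mt3Form_apply, hy] using hker hx

end Mt3

theorem statement14_general (k : Type) [Field k] (z y : kˣ) :
    ∃ ρ : Hk k →ₐ[k] Module.End k (Fin 3 → k),
      ρ (HeckeAlg.T k 0) = Tmat3 k z ∧ ρ (HeckeAlg.S1 k 0) = SMt3 k y ∧
      ((∀ W : Submodule k (Fin 3 → k), (∀ a : Hk k, ∀ x ∈ W, ρ a x ∈ W) → W = ⊥ ∨ W = ⊤) ↔
        (y : k) ^ 3 ≠ (z : k)) := by
  refine ⟨Mt3Rep z y, Mt3Rep_T z y, Mt3Rep_S1 z y, ?_⟩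
  have hinvariant (W : Submodule k (Fin 3 → k)) : (∀ a : Hk k, ∀ x ∈ W, Mt3Rep z y a x ∈ W) ↔
      W ∈ (Tmat3 k z).invtSubmodule ∧ W ∈ (SMt3 k y).invtSubmodule := by
    rw [← Mt3Rep_T z y, ← Mt3Rep_S1 z y]
    exact HeckeAlg.forall_mem_invtSubmodule_iff (Mt3Rep z y)
  simp only [hinvariant, and_imp]
  exact forall_invtSubmodule_Tmat3_SMt3_iff z.ne_zero y.ne_zero

/-- For `z, y ∈ k^×`, the formulas defining `M̃_3(z,y)` endow the `3`-dimensional `k`-vector space with an `H_k`-module structure, and the `H_k`-module `M̃_3(z,y)` is simple if and only if `y³ ≠ z`. -/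
theorem statement14 (p : ℕ) [Fact p.Prime] (k : Type) [Field k] [IsAlgClosed k] [CharP k p]
    (z y : kˣ) :
    ∃ ρ : Hk k →ₐ[k] Module.End k (Fin 3 → k),
      ρ (HeckeAlg.T k 0) = Tmat3 k z ∧ ρ (HeckeAlg.S1 k 0) = SMt3 k y ∧
      ((∀ W : Submodule k (Fin 3 → k), (∀ a : Hk k, ∀ x ∈ W, ρ a x ∈ W) → W = ⊥ ∨ W = ⊤) ↔ ((y : k) ^ 3 ≠ (z : k))) :=
  statement14_general k z y
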